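/- Ratio bound for the approximate marginal gain: let P ⊆ {1,…,m} with |P| < k, let γ_P ∈ Γ_≤(1_P,(k/n)𝟙) be a coupling attaining f(P), and let j ∈ {1,…,m} with j ∉ P and α_{j,max} > 0. Then f̂(x_j ∣ P) ≥ (α_{j,min}/α_{j,max}) · (f(P ∪ {j}) − f(P)). -/

import Mathlib

open Finset

noncomputable section

/-- Frobenius inner product `⟨S, γ⟩ = Σ_{i,j} S_{ij} γ_{ij}`. -/
def dotS {m n : ℕ} (S γ : Fin m → Fin n → ℝ) : ℝ := ∑ i, ∑ j, S i j * γ i j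

/-- Transport polytope with equality marginals. -/
def Gamma {m n : ℕ} (μ : Fin m → ℝ) (ν : Fin n → ℝ) : Set (Fin m → Fin n → ℝ) :=
  {γ | (∀ i j, 0 ≤ γ i j) ∧ (∀ i, ∑ j, γ i j = μ i) ∧ (∀ j, ∑ i, γ i j = ν j)}

/-- Semi-relaxed transport polytope: target marginal constraint is `≤`. -/
def GammaLe {m n : ℕ} (μ : Fin m → ℝ) (ν : Fin n → ℝ) : Set (Fin m → Fin n → ℝ) :=
  {γ | (∀ i j, 0 ≤ γ i j) ∧ (∀ i, ∑ j, γ i j = μ i) ∧ (∀ j, ∑ i, γ i j ≤ ν j)}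

/-- Indicator vector of a subset `P ⊆ {1,…,m}`. -/
def indVec {m : ℕ} (P : Finset (Fin m)) : Fin m → ℝ := fun i => if i ∈ P then 1 else 0

/-- `h(P) = max_{γ ∈ Γ(1_P, (|P|/n)𝟙)} ⟨S, γ⟩`. -/
def hval {m n : ℕ} (S : Fin m → Fin n → ℝ) (P : Finset (Fin m)) : ℝ :=
  sSup (dotS S '' Gamma (indVec P) (fun _ => (P.card : ℝ) / (n : ℝ)))

/-- `f(P) = max_{γ ∈ Γ_≤(1_P, (k/n)𝟙)} ⟨S, γ⟩`. -/
def fval {m n : ℕ} (k : ℕ) (S : Fin m → Fin n → ℝ) (P : Finset (Fin m)) : ℝ :=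
  sSup (dotS S '' GammaLe (indVec P) (fun _ => (k : ℝ) / (n : ℝ)))

/-- Sum of the `t` largest entries of `s`, as the maximum of `∑_{i ∈ T} s i`
over subsets `T` of cardinality `t`. -/
def topSum {n : ℕ} (t : ℕ) (s : Fin n → ℝ) : ℝ :=
  sSup {x : ℝ | ∃ T : Finset (Fin n), T.card = t ∧ x = ∑ i ∈ T, s i}

/-- Sum of the `t` smallest entries of `s`, as the minimum of `∑_{i ∈ T} s i`
over subsets `T` of cardinality `t`. -/
def botSum {n : ℕ} (t : ℕ) (s : Fin n → ℝ) : ℝ :=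
  sInf {x : ℝ | ∃ T : Finset (Fin n), T.card = t ∧ x = ∑ i ∈ T, s i}

/-- `α_{j,max} = (1/⌊n/k⌋)·(sum of the ⌊n/k⌋ largest entries of row j of S)`. -/
def alphaMax {m n : ℕ} (k : ℕ) (S : Fin m → Fin n → ℝ) (j : Fin m) : ℝ :=
  (1 / ((n / k : ℕ) : ℝ)) * topSum (n / k) (S j)

/-- `α_{j,min} = (1/⌊n/k⌋)·(sum of the ⌊n/k⌋ smallest entries of row j of S)`. -/
def alphaMin {m n : ℕ} (k : ℕ) (S : Fin m → Fin n → ℝ) (j : Fin m) : ℝ :=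
  (1 / ((n / k : ℕ) : ℝ)) * botSum (n / k) (S j)

/-- Approximate marginal gain
`f̂(x_j ∣ P) = max{⟨S(j,·), v⟩ : v ≥ 0, 𝟙ᵀv = 1, v ≤ (k/n)𝟙 − γ_Pᵀ𝟙}`. -/
def fhat {m n : ℕ} (k : ℕ) (S : Fin m → Fin n → ℝ)
    (γP : Fin m → Fin n → ℝ) (j : Fin m) : ℝ :=
  sSup {x : ℝ | ∃ v : Fin n → ℝ, (∀ i, 0 ≤ v i) ∧ (∑ i, v i = 1) ∧
    (∀ i, v i ≤ (k : ℝ) / (n : ℝ) - ∑ l, γP l i) ∧ x = ∑ i, S j i * v i}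

/-!
Put `t = ⌊n/k⌋`. Every nonnegative row of mass one with entries at most `k/n ≤ 1/t` scores between
`α_{j,min}` and `α_{j,max}`, by the bathtub principle: at fixed mass, filling the `t` best entries
to capacity is optimal. Deleting row `j` from a coupling for `P ∪ {j}` leaves a coupling for `P`,
so `f(P ∪ {j}) - f(P) ≤ α_{j,max}`. The capacity left over by `γ_P` has mass `k - |P| ≥ 1`, so a
rescaling of it is feasible for `f̂(x_j ∣ P)`, which is therefore at least `α_{j,min}`.
-/

section Bathtub

variable {ι : Type*} [Fintype ι]

lemma exists_finset_card_eq_threshold {α : Type*} [LinearOrder α] [Nonempty α] (s : ι → α)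
    {t : ℕ} (ht : t ≤ Fintype.card ι) :
    ∃ (T : Finset ι) (θ : α), #T = t ∧ (∀ i ∈ T, θ ≤ s i) ∧ ∀ i ∉ T, s i ≤ θ := by
  classical
  induction t with
  | zero =>
    obtain ⟨θ, hθ⟩ := Finite.bddAbove_range s
    exact ⟨∅, θ, card_empty, by simp, fun i _ => hθ ⟨i, rfl⟩⟩
  | succ t ih =>
    obtain ⟨T, θ, hcard, hT, hTc⟩ := ih (by lia)
    have hne : Tᶜ.Nonempty := by
      rw [← card_pos, card_compl]
      lia
    obtain ⟨a, ha, hmax⟩ := exists_max_image Tᶜ s hne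
    rw [mem_compl] at ha
    refine ⟨insert a T, s a, by rw [card_insert_of_notMem ha, hcard], fun i hi => ?_,
      fun i hi => hmax i ?_⟩
    · rcases mem_insert.1 hi with rfl | hi
      · exact le_rfl
      · exact (hTc a ha).trans (hT i hi)
    · exact mem_compl.2 fun h => hi (mem_insert_of_mem h)

lemma sum_mul_le_mul_sum_of_threshold {R : Type*} [CommRing R] [LinearOrder R]
    [IsStrictOrderedRing R] {s v : ι → R} {c θ : R} {T : Finset ι}
    (hT : ∀ i ∈ T, θ ≤ s i) (hTc : ∀ i ∉ T, s i ≤ θ)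
    (hv₀ : ∀ i, 0 ≤ v i) (hvc : ∀ i, v i ≤ c) (hsum : ∑ i, v i = #T * c) :
    ∑ i, s i * v i ≤ c * ∑ i ∈ T, s i := by
  classical
  have hexcess : ∑ i, (s i - θ) * v i ≤ ∑ i ∈ T, (s i - θ) * c := by
    rw [← sum_ite_mem_eq T]
    refine sum_le_sum fun i _ => ?_
    split_ifs with hi
    · exact mul_le_mul_of_nonneg_left (hvc i) (sub_nonneg.2 (hT i hi))
    · exact mul_nonpos_of_nonpos_of_nonneg (sub_nonpos.2 (hTc i hi)) (hv₀ i)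
  have hleft : ∑ i, (s i - θ) * v i = ∑ i, s i * v i - θ * (#T * c) := by
    simp only [sub_mul, sum_sub_distrib, ← mul_sum, hsum]
  have hright : ∑ i ∈ T, (s i - θ) * c = c * ∑ i ∈ T, s i - θ * (#T * c) := by
    rw [← sum_mul, sum_sub_distrib, sum_const, nsmul_eq_mul]
    ring
  linarith

lemma exists_mem_stdSimplex_le {r : ι → ℝ} (hr : ∀ i, 0 ≤ r i) (hsum : 1 ≤ ∑ i, r i) :
    ∃ v ∈ stdSimplex ℝ ι, v ≤ r := by
  have hpos : 0 < ∑ i, r i := zero_lt_one.trans_le hsum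
  refine ⟨fun i => r i / ∑ l, r l, ⟨fun i => div_nonneg (hr i) hpos.le, ?_⟩,
    fun i => div_le_self (hr i) hsum⟩
  rw [← sum_div, div_self hpos.ne']

end Bathtub

section ExtremalSums

variable {n t : ℕ} {s v : Fin n → ℝ}

lemma sum_le_topSum {T : Finset (Fin n)} (hT : #T = t) : ∑ i ∈ T, s i ≤ topSum t s := by
  refine le_csSup (Set.Finite.bddAbove ?_) ⟨T, hT, rfl⟩
  refine (Set.finite_range fun U : Finset (Fin n) => ∑ i ∈ U, s i).subset ?_
  rintro _ ⟨U, -, rfl⟩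
  exact ⟨U, rfl⟩

lemma botSum_eq_neg_topSum_neg : botSum t s = -topSum t (-s) := by
  rw [botSum, topSum, Real.sInf_def]
  congr 2
  ext x
  simp [neg_eq_iff_eq_neg]

lemma botSum_nonneg (hs : ∀ i, 0 ≤ s i) : 0 ≤ botSum t s := by
  refine Real.sInf_nonneg ?_
  rintro _ ⟨T, -, rfl⟩
  exact sum_nonneg fun i _ => hs i

lemma sum_mul_le_mul_topSum {c : ℝ} (ht : t ≤ n) (hc : 0 ≤ c) (hv₀ : ∀ i, 0 ≤ v i)
    (hvc : ∀ i, v i ≤ c) (hsum : ∑ i, v i = t * c) :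
    ∑ i, s i * v i ≤ c * topSum t s := by
  obtain ⟨T, θ, hcard, hT, hTc⟩ :=
    exists_finset_card_eq_threshold s (ht.trans_eq (Fintype.card_fin n).symm)
  calc ∑ i, s i * v i ≤ c * ∑ i ∈ T, s i :=
        sum_mul_le_mul_sum_of_threshold hT hTc hv₀ hvc (by rw [hsum, hcard])
    _ ≤ c * topSum t s := mul_le_mul_of_nonneg_left (sum_le_topSum hcard) hc

lemma mul_botSum_le_sum_mul {c : ℝ} (ht : t ≤ n) (hc : 0 ≤ c) (hv₀ : ∀ i, 0 ≤ v i)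
    (hvc : ∀ i, v i ≤ c) (hsum : ∑ i, v i = t * c) :
    c * botSum t s ≤ ∑ i, s i * v i := by
  have hneg := sum_mul_le_mul_topSum (s := -s) ht hc hv₀ hvc hsum
  simp only [Pi.neg_apply, neg_mul, sum_neg_distrib] at hneg
  rw [botSum_eq_neg_topSum_neg]
  linarith

end ExtremalSums

section RowAverages

variable {m n k : ℕ} {S : Fin m → Fin n → ℝ} {j : Fin m} {v : Fin n → ℝ}

lemma div_le_one_div_natDiv (hk : 0 < k) (hkn : k ≤ n) : (k : ℝ) / n ≤ 1 / (n / k : ℕ) := by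
  have hn : (0 : ℝ) < n := mod_cast hk.trans_le hkn
  have ht : (0 : ℝ) < (n / k : ℕ) := mod_cast Nat.div_pos hkn hk
  rw [div_le_div_iff₀ hn ht, one_mul]
  exact_mod_cast Nat.mul_div_le n k

lemma sum_eq_natDiv_mul_one_div (hk : 0 < k) (hkn : k ≤ n) (hv : v ∈ stdSimplex ℝ (Fin n)) :
    ∑ i, v i = (n / k : ℕ) * (1 / (n / k : ℕ) : ℝ) := by
  rw [hv.2, mul_one_div_cancel (mod_cast (Nat.div_pos hkn hk).ne')]

lemma sum_mul_le_alphaMax (hk : 0 < k) (hkn : k ≤ n) (hv : v ∈ stdSimplex ℝ (Fin n))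
    (hvc : ∀ i, v i ≤ (k : ℝ) / n) : ∑ i, S j i * v i ≤ alphaMax k S j :=
  sum_mul_le_mul_topSum (Nat.div_le_self n k) (by positivity) hv.1
    (fun i => (hvc i).trans (div_le_one_div_natDiv hk hkn)) (sum_eq_natDiv_mul_one_div hk hkn hv)

lemma alphaMin_le_sum_mul (hk : 0 < k) (hkn : k ≤ n) (hv : v ∈ stdSimplex ℝ (Fin n))
    (hvc : ∀ i, v i ≤ (k : ℝ) / n) : alphaMin k S j ≤ ∑ i, S j i * v i :=
  mul_botSum_le_sum_mul (Nat.div_le_self n k) (by positivity) hv.1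
    (fun i => (hvc i).trans (div_le_one_div_natDiv hk hkn)) (sum_eq_natDiv_mul_one_div hk hkn hv)

lemma alphaMin_nonneg (hS : ∀ i, 0 ≤ S j i) : 0 ≤ alphaMin k S j :=
  mul_nonneg (by positivity) (botSum_nonneg hS)

end RowAverages

section Couplings

variable {m n : ℕ} {μ : Fin m → ℝ} {ν : Fin n → ℝ} {S γ : Fin m → Fin n → ℝ}
  {P : Finset (Fin m)} {j : Fin m}

lemma GammaLe.apply_le (hγ : γ ∈ GammaLe μ ν) (i : Fin m) (l : Fin n) : γ i l ≤ ν l :=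
  (single_le_sum (f := fun i => γ i l) (fun i _ => hγ.1 i l) (mem_univ i)).trans (hγ.2.2 l)

lemma GammaLe.sum_residual (hγ : γ ∈ GammaLe μ ν) :
    ∑ l, (ν l - ∑ i, γ i l) = ∑ l, ν l - ∑ i, μ i := by
  rw [sum_sub_distrib, sum_comm]
  simp only [hγ.2.1]

lemma GammaLe.update_zero (hγ : γ ∈ GammaLe μ ν) (j : Fin m) :
    Function.update γ j 0 ∈ GammaLe (Function.update μ j 0) ν := by
  obtain ⟨hnonneg, hrow, hcol⟩ := hγ
  have hbounds : ∀ i l, 0 ≤ Function.update γ j 0 i l ∧ Function.update γ j 0 i l ≤ γ i l := by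
    intro i l
    rcases eq_or_ne i j with rfl | hi
    · simp [hnonneg i l]
    · simp [hi, hnonneg i l]
  refine ⟨fun i l => (hbounds i l).1, fun i => ?_,
    fun l => (sum_le_sum fun i _ => (hbounds i l).2).trans (hcol l)⟩
  rcases eq_or_ne i j with rfl | hi
  · simp
  · simp [hi, hrow i]

lemma GammaLe.nonempty (hμ : ∀ i, 0 ≤ μ i) (hν : ∀ l, 0 ≤ ν l) (hpos : 0 < ∑ l, ν l)
    (hle : ∑ i, μ i ≤ ∑ l, ν l) : (GammaLe μ ν).Nonempty := by
  refine ⟨fun i l => μ i * (ν l / ∑ l, ν l),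
    fun i l => mul_nonneg (hμ i) (div_nonneg (hν l) hpos.le), fun i => ?_, fun l => ?_⟩
  · rw [← mul_sum, ← sum_div, div_self hpos.ne', mul_one]
  · calc ∑ i, μ i * (ν l / ∑ l, ν l) = (∑ i, μ i) * (ν l / ∑ l, ν l) := (sum_mul ..).symm
      _ ≤ (∑ l, ν l) * (ν l / ∑ l, ν l) :=
        mul_le_mul_of_nonneg_right hle (div_nonneg (hν l) hpos.le)
      _ = ν l := mul_div_cancel₀ _ hpos.ne'

lemma bddAbove_dotS_image_GammaLe : BddAbove (dotS S '' GammaLe μ ν) := by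
  refine ⟨∑ i, ∑ l, |S i l| * ν l, ?_⟩
  rintro _ ⟨γ, hγ, rfl⟩
  refine sum_le_sum fun i _ => sum_le_sum fun l _ => ?_
  exact mul_le_mul (le_abs_self _) (GammaLe.apply_le hγ i l) (hγ.1 i l) (abs_nonneg _)

lemma dotS_eq_add_dotS_update_zero (j : Fin m) :
    dotS S γ = ∑ l, S j l * γ j l + dotS S (Function.update γ j 0) := by
  have hrest : ∑ i ∈ univ.erase j, ∑ l, S i l * γ i l =
      ∑ i ∈ univ.erase j, ∑ l, S i l * Function.update γ j 0 i l :=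
    sum_congr rfl fun i hi => by rw [Function.update_of_ne (ne_of_mem_erase hi)]
  rw [dotS, dotS, ← add_sum_erase univ _ (mem_univ j), hrest,
    ← add_sum_erase univ (fun i => ∑ l, S i l * Function.update γ j 0 i l) (mem_univ j)]
  simp

lemma indVec_nonneg (i : Fin m) : 0 ≤ indVec P i := by
  rw [indVec]
  positivity

lemma sum_indVec : ∑ i, indVec P i = #P := by
  simp [indVec]

lemma update_indVec_insert (hj : j ∉ P) : Function.update (indVec (insert j P)) j 0 = indVec P := by
  ext i
  rcases eq_or_ne i j with rfl | hi
  · simp [indVec, hj]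
  · simp [indVec, hi]

end Couplings

section MarginalGain

variable {m n k : ℕ} {S γ : Fin m → Fin n → ℝ} {P : Finset (Fin m)} {j : Fin m}

lemma sum_fin_div_self (hn : 0 < n) (c : ℝ) : ∑ _l : Fin n, c / n = c := by
  have hn₀ : (n : ℝ) ≠ 0 := mod_cast hn.ne'
  simp [mul_div_cancel₀ _ hn₀]

lemma GammaLe.nonempty_indVec (hk : 0 < k) (hn : 0 < n) (hP : #P ≤ k) :
    (GammaLe (indVec P) (fun _ : Fin n => (k : ℝ) / n)).Nonempty := by
  refine GammaLe.nonempty indVec_nonneg (fun _ => by positivity) ?_ ?_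
  · rw [sum_fin_div_self hn]
    exact_mod_cast hk
  · rw [sum_fin_div_self hn, sum_indVec]
    exact_mod_cast hP

lemma fval_insert_le_fval_add_alphaMax (hkn : k ≤ n) (hP : #P < k) (hj : j ∉ P) :
    fval k S (insert j P) ≤ fval k S P + alphaMax k S j := by
  have hk : 0 < k := Nat.zero_lt_of_lt hP
  have hcard : #(insert j P) ≤ k := (card_insert_le j P).trans hP
  refine csSup_le ((GammaLe.nonempty_indVec hk (hk.trans_le hkn) hcard).image _) ?_
  rintro _ ⟨γ, hγ, rfl⟩
  have hrow : ∑ l, S j l * γ j l ≤ alphaMax k S j :=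
    sum_mul_le_alphaMax hk hkn ⟨hγ.1 j, by simp [hγ.2.1 j, indVec]⟩ (GammaLe.apply_le hγ j)
  have hrest : dotS S (Function.update γ j 0) ≤ fval k S P :=
    le_csSup bddAbove_dotS_image_GammaLe
      ⟨_, update_indVec_insert hj ▸ GammaLe.update_zero hγ j, rfl⟩
  rw [dotS_eq_add_dotS_update_zero j]
  linarith

lemma alphaMin_le_fhat (hkn : k ≤ n) (hP : #P < k)
    (hγ : γ ∈ GammaLe (indVec P) (fun _ => (k : ℝ) / n)) :
    alphaMin k S j ≤ fhat k S γ j := by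
  have hk : 0 < k := Nat.zero_lt_of_lt hP
  have hmass : 1 ≤ ∑ l, ((k : ℝ) / n - ∑ i, γ i l) := by
    rw [GammaLe.sum_residual hγ, sum_fin_div_self (hk.trans_le hkn), sum_indVec,
      le_sub_iff_add_le']
    exact_mod_cast hP
  have hcap (l : Fin n) : (k : ℝ) / n - ∑ i, γ i l ≤ k / n :=
    sub_le_self _ (sum_nonneg fun i _ => hγ.1 i l)
  obtain ⟨v, hv, hvle⟩ := exists_mem_stdSimplex_le (fun l => sub_nonneg.2 (hγ.2.2 l)) hmass
  refine (alphaMin_le_sum_mul hk hkn hv fun l => (hvle l).trans (hcap l)).trans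
    (le_csSup ⟨alphaMax k S j, ?_⟩ ⟨v, hv.1, hv.2, hvle, rfl⟩)
  rintro _ ⟨w, hw₀, hw₁, hwle, rfl⟩
  exact sum_mul_le_alphaMax hk hkn ⟨hw₀, hw₁⟩ fun l => (hwle l).trans (hcap l)

end MarginalGain

theorem stmt_18_general {m n k : ℕ} (hkn : k ≤ n) {S : Fin m → Fin n → ℝ}
    {P : Finset (Fin m)} (hP : #P < k) {γP : Fin m → Fin n → ℝ}
    (hγ : γP ∈ GammaLe (indVec P) (fun _ => (k : ℝ) / (n : ℝ)))
    {j : Fin m} (hj : j ∉ P) (hmin : 0 ≤ alphaMin k S j) (hmax : 0 < alphaMax k S j) :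
    (alphaMin k S j / alphaMax k S j) * (fval k S (insert j P) - fval k S P) ≤
      fhat k S γP j :=
  calc (alphaMin k S j / alphaMax k S j) * (fval k S (insert j P) - fval k S P)
      ≤ (alphaMin k S j / alphaMax k S j) * alphaMax k S j :=
        mul_le_mul_of_nonneg_left
          (sub_le_iff_le_add'.2 (fval_insert_le_fval_add_alphaMax hkn hP hj))
          (div_nonneg hmin hmax.le)
    _ = alphaMin k S j := div_mul_cancel₀ _ hmax.ne'
    _ ≤ fhat k S γP j := alphaMin_le_fhat hkn hP hγ

/-- ratio bound
`f̂(x_j ∣ P) ≥ (α_{j,min}/α_{j,max})·(f(P ∪ {j}) − f(P))`. -/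
theorem stmt_18 (m n k : ℕ) (hm : 0 < m) (hn : 0 < n) (hk : 0 < k)
    (hkm : k ≤ m) (hkn : k ≤ n)
    (S : Fin m → Fin n → ℝ) (hS : ∀ i j, 0 ≤ S i j)
    (P : Finset (Fin m)) (hP : P.card < k)
    (γP : Fin m → Fin n → ℝ)
    (hγ : γP ∈ GammaLe (indVec P) (fun _ => (k : ℝ) / (n : ℝ)))
    (hopt : dotS S γP = fval k S P)
    (j : Fin m) (hj : j ∉ P) (hα : 0 < alphaMax k S j) :
    (alphaMin k S j / alphaMax k S j) * (fval k S (insert j P) - fval k S P) ≤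
      fhat k S γP j :=
  stmt_18_general hkn hP hγ hj (alphaMin_nonneg (hS j)) hα
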